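/- arXiv:2005.08300 — 3 statements merged into one kernel-verified Lean document; each statement's English description precedes it below -/
import Mathlib

section
/- Let f: F_2^m → F_2 be a Boolean function of m variables and let n ≥ m. Then the Boolean function f*: F_2^n → F_2 defined by the CA-based construction f*(x_1,…,x_n) = ⊕_{i=1}^{n−m+1} f(x_i, x_{i+1}, …, x_{i+m−1}) has the same algebraic degree as f. -/
/-- The CA-based construction: given a local rule `f` of `m` variables and `n ≥ m`,
the `n`-variable function `f*` is the XOR of all output cells of the no-boundary CA. -/
def caStar (m n : ℕ) (h : m ≤ n) (f : (Fin m → ZMod 2) → ZMod 2) :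
    (Fin n → ZMod 2) → ZMod 2 :=
  fun x => ∑ i : Fin (n - m + 1),
    f (fun j => x ⟨i.val + j.val, by have hi := i.isLt; have hj := j.isLt; omega⟩)

/-- The ANF coefficient `a_I` of a Boolean function, via the Möbius transform:
`a_I = ⊕_{x : supp(x) ⊆ I} f(x)`. -/
def anf {n : ℕ} (f : (Fin n → ZMod 2) → ZMod 2) (I : Finset (Fin n)) : ZMod 2 :=
  ∑ x ∈ Finset.univ.filter (fun x : Fin n → ZMod 2 => ∀ i, x i = 1 → i ∈ I), f x

/-- The algebraic degree of a Boolean function: `max {|I| : a_I ≠ 0}` (0 for the zero function). -/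
def algDegree {n : ℕ} (f : (Fin n → ZMod 2) → ZMod 2) : ℕ :=
  (Finset.univ.filter fun I : Finset (Fin n) => anf f I ≠ 0).sup Finset.card

/-- The Walsh transform `W_f(a) = Σ_x (-1)^(f(x) ⊕ a·x)`. -/
def walsh {n : ℕ} (f : (Fin n → ZMod 2) → ZMod 2) (a : Fin n → ZMod 2) : ℤ :=
  ∑ x : Fin n → ZMod 2, (-1 : ℤ) ^ (f x + ∑ i, a i * x i).val

/-- The semi-bent value `λ`: `2^((n+1)/2)` for odd `n`, `2^((n+2)/2)` for even `n`. -/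
def sbLambda (n : ℕ) : ℤ := if Odd n then 2 ^ ((n + 1) / 2) else 2 ^ ((n + 2) / 2)

/-- A Boolean function is semi-bent if its Walsh transform takes only the values `0, λ, -λ`. -/
def semiBent {n : ℕ} (f : (Fin n → ZMod 2) → ZMod 2) : Prop :=
  ∀ a, walsh f a = 0 ∨ walsh f a = sbLambda n ∨ walsh f a = -sbLambda n

/-- A Boolean function is balanced if it takes the value 1 exactly `2^(n-1)` times. -/
def balanced {n : ℕ} (f : (Fin n → ZMod 2) → ZMod 2) : Prop :=
  (Finset.univ.filter fun x => f x = 1).card = 2 ^ (n - 1)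

/-- `b` is a linear structure of `g` if the derivative `D_b g(x) = g(x) ⊕ g(x ⊕ b)` is constant. -/
def isLinearStructure {n : ℕ} (g : (Fin n → ZMod 2) → ZMod 2)
    (b : Fin n → ZMod 2) : Prop :=
  (∀ x, g x + g (x + b) = 0) ∨ (∀ x, g x + g (x + b) = 1)

/-!
The coefficient of `f*` at a monomial is the sum of the coefficients of the shifts of `f`, and a
shift by `i` turns the monomial `J` of `f` into `i + J`. Hence `deg f* ≤ deg f`. Conversely, among
the monomials of `f` of maximal degree `d > 0` choose one, `J`, with the least sum of indices. A
shift by `i` adds `i * d` to that sum, so no shift with `i > 0` produces `J` and the coefficient of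
`f*` at `J` equals that of `f`.
-/

section Anf

variable {m n : ℕ}

theorem anf_sum {ι : Type*} (s : Finset ι) (g : ι → (Fin n → ZMod 2) → ZMod 2)
    (I : Finset (Fin n)) : anf (fun x => ∑ i ∈ s, g i x) I = ∑ i ∈ s, anf (g i) I :=
  Finset.sum_comm

theorem anf_eq_zero_of_forall_update_eq {f : (Fin n → ZMod 2) → ZMod 2} {I : Finset (Fin n)}
    {a : Fin n} (ha : a ∈ I) (hf : ∀ x c, f (Function.update x a c) = f x) : anf f I = 0 := by
  -- The points of the sum cancel in pairs that differ exactly in coordinate `a`.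
  refine Finset.sum_involution (fun x _ => Function.update x a (x a + 1)) ?_ ?_ ?_ ?_
  · intro x _
    rw [hf, CharTwo.add_self_eq_zero]
  · intro x _ _ hfixed
    simpa using congrFun hfixed a
  · intro x hx
    simp only [Finset.mem_filter_univ] at hx ⊢
    intro i hi
    rcases eq_or_ne i a with rfl | hia
    · exact ha
    · exact hx i (by rwa [Function.update_of_ne hia] at hi)
  · intro x _
    simp [add_assoc, CharTwo.add_self_eq_zero]

theorem anf_comp_eq_zero_of_notMem_range (e : Fin m → Fin n) (f : (Fin m → ZMod 2) → ZMod 2)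
    {I : Finset (Fin n)} {a : Fin n} (ha : a ∈ I) (hae : a ∉ Set.range e) :
    anf (fun x => f (x ∘ e)) I = 0 :=
  anf_eq_zero_of_forall_update_eq ha fun x c => by
    rw [Function.update_comp_eq_of_notMem_range _ _ hae]

theorem extend_comp_self_of_support_subset {α β M : Type*} [Zero M] (e : α → β) {x : β → M}
    (hx : Function.support x ⊆ Set.range e) : Function.extend e (x ∘ e) 0 = x := by
  funext b
  by_cases hb : b ∈ Set.range e
  · obtain ⟨a, rfl⟩ := hb
    have hfactors : (x ∘ e).FactorsThrough e := fun _ _ hab => congrArg x hab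
    exact hfactors.extend_apply 0 a
  · rw [Function.extend_apply' _ _ _ hb]
    exact (Function.notMem_support.1 fun h => hb (hx h)).symm

theorem anf_comp_map (e : Fin m ↪ Fin n) (f : (Fin m → ZMod 2) → ZMod 2) (J : Finset (Fin m)) :
    anf (fun x => f (x ∘ e)) (J.map e) = anf f J := by
  refine Finset.sum_nbij' (fun x => x ∘ e) (fun y => Function.extend e y 0) ?_ ?_ ?_ ?_ ?_
  · intro x hx
    simp only [Finset.mem_filter_univ] at hx ⊢
    exact fun j hj => (Finset.mem_map' e).1 (hx (e j) hj)
  · intro y hy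
    simp only [Finset.mem_filter_univ] at hy ⊢
    intro i hi
    by_cases hie : ∃ j, e j = i
    · obtain ⟨j, rfl⟩ := hie
      rw [e.injective.extend_apply] at hi
      exact Finset.mem_map_of_mem e (hy j hi)
    · simp [Function.extend_apply' _ _ _ hie] at hi
  · intro x hx
    simp only [Finset.mem_filter_univ] at hx
    refine extend_comp_self_of_support_subset e fun i hi => ?_
    obtain ⟨j, -, rfl⟩ := Finset.mem_map.1 (hx i (Fin.eq_one_of_ne_zero (x i) hi))
    exact ⟨j, rfl⟩
  · exact fun y _ => Function.extend_comp e.injective y 0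
  · exact fun _ _ => rfl

theorem exists_eq_map_of_anf_comp_ne_zero {e : Fin m ↪ Fin n} {f : (Fin m → ZMod 2) → ZMod 2}
    {I : Finset (Fin n)} (hI : anf (fun x => f (x ∘ e)) I ≠ 0) :
    ∃ J : Finset (Fin m), I = J.map e ∧ anf f J ≠ 0 := by
  have hrange : I ⊆ Finset.univ.map e := fun a ha => by
    by_contra hae
    exact hI (anf_comp_eq_zero_of_notMem_range e f ha (by simpa using hae))
  obtain ⟨J, -, rfl⟩ := Finset.subset_map_iff.1 hrange
  exact ⟨J, rfl, by rwa [anf_comp_map] at hI⟩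

end Anf

section AlgDegree

variable {m n : ℕ}

theorem algDegree_le_iff {f : (Fin n → ZMod 2) → ZMod 2} {d : ℕ} :
    algDegree f ≤ d ↔ ∀ I, anf f I ≠ 0 → I.card ≤ d := by
  simp [algDegree]

theorem card_le_algDegree {f : (Fin n → ZMod 2) → ZMod 2} {I : Finset (Fin n)}
    (hI : anf f I ≠ 0) : I.card ≤ algDegree f :=
  algDegree_le_iff.1 le_rfl I hI

theorem exists_anf_ne_zero_card_eq_algDegree {f : (Fin n → ZMod 2) → ZMod 2}
    (hf : algDegree f ≠ 0) : ∃ I, anf f I ≠ 0 ∧ I.card = algDegree f := by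
  have hne : (Finset.univ.filter fun I => anf f I ≠ 0).Nonempty := by
    contrapose! hf
    rw [algDegree, hf, Finset.sup_empty, Nat.bot_eq_zero]
  obtain ⟨I, hI, hcard⟩ := Finset.exists_mem_eq_sup _ hne Finset.card
  exact ⟨I, (Finset.mem_filter_univ I).1 hI, hcard.symm⟩

theorem algDegree_sum_le {ι : Type*} {s : Finset ι} {g : ι → (Fin n → ZMod 2) → ZMod 2} {d : ℕ}
    (hg : ∀ i ∈ s, algDegree (g i) ≤ d) : algDegree (fun x => ∑ i ∈ s, g i x) ≤ d := by
  refine algDegree_le_iff.2 fun I hI => ?_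
  rw [anf_sum] at hI
  obtain ⟨i, hi, hgi⟩ := Finset.exists_ne_zero_of_sum_ne_zero hI
  exact (card_le_algDegree hgi).trans (hg i hi)

theorem algDegree_comp_embedding (e : Fin m ↪ Fin n) (f : (Fin m → ZMod 2) → ZMod 2) :
    algDegree (fun x => f (x ∘ e)) = algDegree f := by
  apply le_antisymm <;> refine algDegree_le_iff.2 fun I hI => ?_
  · obtain ⟨J, rfl, hJ⟩ := exists_eq_map_of_anf_comp_ne_zero hI
    rw [Finset.card_map]
    exact card_le_algDegree hJ
  · rw [← Finset.card_map e]
    exact card_le_algDegree (by rwa [anf_comp_map])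

end AlgDegree

section Window

variable {m n : ℕ} (h : m ≤ n)

/-- The neighbourhood `{i, …, i + m - 1}` of the `i`-th output cell of the cellular automaton,
as the embedding `j ↦ i + j` of the `m` local coordinates into the `n` global ones. -/
def window (i : Fin (n - m + 1)) : Fin m ↪ Fin n where
  toFun j := ⟨i + j, by omega⟩
  inj' j k hjk := Fin.ext (Nat.add_left_cancel (congrArg Fin.val hjk))

theorem val_window (i : Fin (n - m + 1)) (j : Fin m) : (window h i j : ℕ) = i + j :=
  rfl

theorem caStar_eq_sum_window (f : (Fin m → ZMod 2) → ZMod 2) :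
    caStar m n h f = fun x => ∑ i, f (x ∘ window h i) :=
  rfl

theorem sum_map_window (i : Fin (n - m + 1)) (J : Finset (Fin m)) :
    ∑ a ∈ J.map (window h i), (a : ℕ) = J.card * i + ∑ j ∈ J, (j : ℕ) := by
  simp [val_window, Finset.sum_add_distrib]

theorem sum_lt_sum_of_map_window_zero_eq {i : Fin (n - m + 1)} (hi : i ≠ 0)
    {J K : Finset (Fin m)} (hJ : J.Nonempty) (hJK : J.map (window h 0) = K.map (window h i)) :
    ∑ k ∈ K, (k : ℕ) < ∑ j ∈ J, (j : ℕ) := by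
  have hcard : J.card = K.card := by simpa using congrArg Finset.card hJK
  have hsum : ∑ j ∈ J, (j : ℕ) = K.card * i + ∑ k ∈ K, (k : ℕ) := by
    rw [← sum_map_window h i K, ← hJK, sum_map_window, Fin.val_zero, mul_zero, zero_add]
  have hshift : 0 < K.card * (i : ℕ) :=
    Nat.mul_pos (hcard ▸ hJ.card_pos) (Fin.pos_iff_ne_zero.2 hi)
  omega

theorem anf_caStar_map_window_zero {f : (Fin m → ZMod 2) → ZMod 2} {J : Finset (Fin m)}
    (hJ : J.Nonempty) (hmin : ∀ K, anf f K ≠ 0 → K.card = J.card →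
      ∑ j ∈ J, (j : ℕ) ≤ ∑ k ∈ K, (k : ℕ)) :
    anf (caStar m n h f) (J.map (window h 0)) = anf f J := by
  rw [caStar_eq_sum_window, anf_sum, Fintype.sum_eq_single 0, anf_comp_map]
  intro i hi
  by_contra hne
  obtain ⟨K, hJK, hK⟩ := exists_eq_map_of_anf_comp_ne_zero hne
  have hcard : K.card = J.card := by simpa using (congrArg Finset.card hJK).symm
  exact (hmin K hK hcard).not_gt (sum_lt_sum_of_map_window_zero_eq h hi hJ hJK)

theorem algDegree_caStar_le (f : (Fin m → ZMod 2) → ZMod 2) :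
    algDegree (caStar m n h f) ≤ algDegree f :=
  algDegree_sum_le fun i _ => (algDegree_comp_embedding (window h i) f).le

theorem algDegree_le_algDegree_caStar (f : (Fin m → ZMod 2) → ZMod 2) :
    algDegree f ≤ algDegree (caStar m n h f) := by
  rcases eq_or_ne (algDegree f) 0 with hdeg | hdeg
  · exact hdeg.trans_le (Nat.zero_le _)
  obtain ⟨J, ⟨hJ, hJcard⟩, hmin⟩ := Set.exists_min_image
    {J : Finset (Fin m) | anf f J ≠ 0 ∧ J.card = algDegree f} (fun J => ∑ j ∈ J, (j : ℕ))
    (Set.toFinite _) (exists_anf_ne_zero_card_eq_algDegree hdeg)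
  have hJne : J.Nonempty := Finset.card_ne_zero.1 (hJcard ▸ hdeg)
  have hcoeff : anf (caStar m n h f) (J.map (window h 0)) = anf f J :=
    anf_caStar_map_window_zero h hJne fun K hK hKcard => hmin K ⟨hK, hKcard.trans hJcard⟩
  calc
    algDegree f = (J.map (window h 0)).card := by rw [Finset.card_map, hJcard]
    _ ≤ algDegree (caStar m n h f) := card_le_algDegree (by rwa [hcoeff])

end Window

/-- the CA-based construction preserves the algebraic degree. -/
theorem caStar_algDegree_eq (m n : ℕ) (h : m ≤ n) (f : (Fin m → ZMod 2) → ZMod 2) :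
    algDegree (caStar m n h f) = algDegree f :=
  le_antisymm (algDegree_caStar_le h f) (algDegree_le_algDegree_caStar h f)
end

section
/- The maximum, over all Boolean functions f: F_2^4 → F_2 of algebraic degree exactly 2, of the largest integer N ∈ {4,…,20} such that the function f*: F_2^n → F_2 given by the CA-based construction is semi-bent for every n with 4 ≤ n ≤ N, equals 8. In particular, there is no 4-variable Boolean function of algebraic degree 2 for which f* is semi-bent for all n with 4 ≤ n ≤ 20. -/
/-!
Over `𝔽₂` a function of degree at most two is a constant plus a quadratic form `Q`. Squaring its
Walsh transform and substituting `y = b + x` leaves a sum over the radical of the polar form of `Q`,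
on which `Q` is additive; so the squared Walsh transform on `𝔽₂ⁿ` only takes the values `0` and
`2ⁿ |rad Q|`, the latter at least once, and semi-bentness says that the radical has order `2`
(`n` odd) or `4` (`n` even). For `f*` the Gram matrix of the polar form is a sum of copies of the
`4 × 4` alternating Gram matrix of `f` shifted along the diagonal. Of the 64 such matrices, only six
have radicals of the right order for `n = 4, 6, 7`, and at `n = 9` all six have a radical of
order `8`. One of them, that of `x₀ (x₁ + x₂)`, is good for all `n` from `4` to `8`.
-/

open Finset Matrix
open QuadraticMap (linMulLin polar polarBilin_apply_apply)

section SignCharacter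

/-- The character `z ↦ (-1)^z` of `𝔽₂`, whose values are the summands of the Walsh transform. -/
def signChar : AddChar (ZMod 2) ℤ := AddChar.zmodChar 2 neg_one_sq

theorem signChar_apply (z : ZMod 2) : signChar z = (-1) ^ z.val :=
  AddChar.zmodChar_apply _ z

theorem signChar_sq (z : ZMod 2) : signChar z ^ 2 = 1 := by
  rw [← AddChar.map_nsmul_eq_pow, ZModModule.char_nsmul_eq_zero 2, AddChar.map_zero_eq_one]

theorem signChar_comp_eq_zero_iff {G : Type*} [AddGroup G] (φ : G →+ ZMod 2) :
    signChar.compAddMonoidHom φ = 0 ↔ φ = 0 := by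
  have signChar_eq_one_iff : ∀ z, signChar z = 1 ↔ z = 0 := by decide
  simp only [AddChar.eq_zero_iff, AddChar.compAddMonoidHom_apply, signChar_eq_one_iff,
    AddMonoidHom.ext_iff, AddMonoidHom.zero_apply]

theorem sum_signChar_comp_eq_ite {G : Type*} [AddGroup G] [Fintype G] (φ : G →+ ZMod 2)
    [Decidable (φ = 0)] :
    ∑ x, signChar (φ x) = if φ = 0 then (Fintype.card G : ℤ) else 0 := by
  classical
  have h := AddChar.sum_eq_ite (signChar.compAddMonoidHom φ)
  simpa only [AddChar.compAddMonoidHom_apply, signChar_comp_eq_zero_iff] using h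

end SignCharacter

section ExponentialSum

variable {V : Type*} [AddCommGroup V] [Module (ZMod 2) V] (Q : QuadraticForm (ZMod 2) V)

theorem signChar_mul_signChar_add (b x : V) :
    signChar (Q x) * signChar (Q (b + x)) = signChar (Q b) * signChar (Q.polarBilin b x) := by
  rw [← AddChar.map_add_eq_mul, ← AddChar.map_add_eq_mul, QuadraticMap.map_add Q,
    polarBilin_apply_apply]
  congr 1
  linear_combination CharTwo.add_self_eq_zero (Q x)

/-- A quadratic form is additive on the radical of its polar form. -/
def polarRadicalHom : LinearMap.ker Q.polarBilin →+ ZMod 2 where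
  toFun b := Q b
  map_zero' := Q.map_zero
  map_add' b c := by
    have hbc : polar Q b c = 0 := LinearMap.congr_fun b.2 c
    rw [Submodule.coe_add, QuadraticMap.map_add Q, hbc, add_zero]

variable [Fintype V]

theorem sum_signChar_polarBilin (b : V) [Decidable (b ∈ LinearMap.ker Q.polarBilin)] :
    ∑ x, signChar (Q.polarBilin b x)
      = if b ∈ LinearMap.ker Q.polarBilin then (Fintype.card V : ℤ) else 0 := by
  classical
  have h := sum_signChar_comp_eq_ite (Q.polarBilin b).toAddMonoidHom
  have hb : (Q.polarBilin b).toAddMonoidHom = 0 ↔ b ∈ LinearMap.ker Q.polarBilin := by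
    simp only [LinearMap.mem_ker, DFunLike.ext_iff, LinearMap.toAddMonoidHom_coe,
      AddMonoidHom.zero_apply, LinearMap.zero_apply]
  simpa only [hb, LinearMap.toAddMonoidHom_coe] using h

theorem sum_signChar_quadraticForm_sq [Fintype (LinearMap.ker Q.polarBilin)] :
    (∑ x, signChar (Q x)) ^ 2
      = Fintype.card V * ∑ b : LinearMap.ker Q.polarBilin, signChar (Q b) := by
  classical
  calc (∑ x, signChar (Q x)) ^ 2
      = ∑ x, ∑ y, signChar (Q x) * signChar (Q y) := by rw [sq, Fintype.sum_mul_sum]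
    _ = ∑ x, ∑ b, signChar (Q x) * signChar (Q (b + x)) :=
        Fintype.sum_congr _ _ fun x => (Equiv.sum_comp (Equiv.addRight x) _).symm
    _ = ∑ b, signChar (Q b) * ∑ x, signChar (Q.polarBilin b x) := by
        rw [sum_comm]
        simp only [signChar_mul_signChar_add, mul_sum]
    _ = ∑ b with b ∈ LinearMap.ker Q.polarBilin, Fintype.card V * signChar (Q b) := by
        simp only [sum_signChar_polarBilin, sum_filter, mul_ite, mul_zero,
          mul_comm (Fintype.card V : ℤ)]
    _ = Fintype.card V * ∑ b : LinearMap.ker Q.polarBilin, signChar (Q b) := by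
        rw [← mul_sum, sum_subtype _ (fun _ => mem_filter_univ _)]

theorem sum_signChar_quadraticForm_sq_eq_zero_or :
    (∑ x, signChar (Q x)) ^ 2 = 0 ∨
      (∑ x, signChar (Q x)) ^ 2 = Fintype.card V * Nat.card (LinearMap.ker Q.polarBilin) := by
  classical
  have h := sum_signChar_comp_eq_ite (polarRadicalHom Q)
  have hQ : ∑ b : LinearMap.ker Q.polarBilin, signChar (Q b)
      = ∑ b, signChar (polarRadicalHom Q b) := rfl
  rw [sum_signChar_quadraticForm_sq, hQ, h, Nat.card_eq_fintype_card]
  split_ifs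
  · exact Or.inr rfl
  · exact Or.inl (mul_zero _)

end ExponentialSum

section Walsh

variable {n : ℕ}

theorem walsh_eq_sum_signChar (f : (Fin n → ZMod 2) → ZMod 2) (a : Fin n → ZMod 2) :
    walsh f a = ∑ x, signChar (f x + a ⬝ᵥ x) := by
  simp only [walsh, signChar_apply, dotProduct]

theorem sum_signChar_dotProduct (x : Fin n → ZMod 2) :
    ∑ a, signChar (a ⬝ᵥ x) = if x = 0 then 2 ^ n else 0 := by
  classical
  let φ : (Fin n → ZMod 2) →+ ZMod 2 := AddMonoidHom.mk' (· ⬝ᵥ x) fun a b => add_dotProduct a b x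
  have hφ : φ = 0 ↔ x = 0 := by
    rw [← dotProduct_eq_zero_iff, AddMonoidHom.ext_iff]
    exact forall_congr' fun a => by rw [dotProduct_comm]; rfl
  have h := sum_signChar_comp_eq_ite φ
  simpa [hφ, φ] using h

theorem sum_walsh (f : (Fin n → ZMod 2) → ZMod 2) : ∑ a, walsh f a = 2 ^ n * signChar (f 0) := by
  simp only [walsh_eq_sum_signChar, AddChar.map_add_eq_mul]
  rw [sum_comm]
  simp only [← mul_sum, sum_signChar_dotProduct, mul_ite, mul_zero, sum_ite_eq', mem_univ, if_true]
  exact mul_comm _ _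

theorem exists_walsh_ne_zero (f : (Fin n → ZMod 2) → ZMod 2) : ∃ a, walsh f a ≠ 0 := by
  by_contra! h
  have hsum : 2 ^ n * signChar (f 0) = 0 := by rw [← sum_walsh, Fintype.sum_eq_zero _ h]
  have hne : signChar (f 0) ≠ 0 := pow_ne_zero_iff two_ne_zero |>.mp (by simp [signChar_sq])
  exact mul_ne_zero (by positivity) hne hsum

theorem polarBilin_add_linMulLin_self {V : Type*} [AddCommGroup V] [Module (ZMod 2) V]
    (Q : QuadraticForm (ZMod 2) V) (ℓ : V →ₗ[ZMod 2] ZMod 2) :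
    (Q + linMulLin ℓ ℓ).polarBilin = Q.polarBilin := by
  ext x y
  simp only [polarBilin_apply_apply, polar, _root_.add_apply, QuadraticMap.linMulLin_apply,
    map_add]
  linear_combination CharTwo.add_self_eq_zero (ℓ x * ℓ y)

theorem walsh_sq_of_eq_const_add {f : (Fin n → ZMod 2) → ZMod 2} {c : ZMod 2}
    {Q : QuadraticForm (ZMod 2) (Fin n → ZMod 2)} (hf : ∀ x, f x = c + Q x) (a : Fin n → ZMod 2) :
    walsh f a ^ 2 = 0 ∨ walsh f a ^ 2 = 2 ^ n * Nat.card (LinearMap.ker Q.polarBilin) := by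
  let ℓ : (Fin n → ZMod 2) →ₗ[ZMod 2] ZMod 2 := dotProductBilin (ZMod 2) (ZMod 2) a
  -- Over `𝔽₂` a linear form is its own square, so it can be absorbed into the quadratic form.
  have hℓ (x : Fin n → ZMod 2) : f x + a ⬝ᵥ x = c + (Q + linMulLin ℓ ℓ) x := by
    rw [hf, _root_.add_apply, QuadraticMap.linMulLin_apply, ← sq, ZMod.pow_card, add_assoc]
    rfl
  have hwalsh : walsh f a ^ 2 = (∑ x, signChar ((Q + linMulLin ℓ ℓ) x)) ^ 2 := by
    simp only [walsh_eq_sum_signChar, hℓ, AddChar.map_add_eq_mul, ← mul_sum, mul_pow,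
      signChar_sq, one_mul]
  have h := sum_signChar_quadraticForm_sq_eq_zero_or (Q + linMulLin ℓ ℓ)
  rw [polarBilin_add_linMulLin_self, ← hwalsh] at h
  simpa using h

theorem sbLambda_sq (n : ℕ) : sbLambda n ^ 2 = 2 ^ n * if Odd n then 2 else 4 := by
  unfold sbLambda
  split_ifs with hn
  · obtain ⟨k, rfl⟩ := hn
    rw [show (2 * k + 1 + 1) / 2 = k + 1 by omega]
    ring
  · obtain ⟨k, rfl⟩ := Nat.not_odd_iff_even.mp hn
    rw [show (k + k + 2) / 2 = k + 1 by omega]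
    ring

theorem semiBent_iff_walsh_sq {f : (Fin n → ZMod 2) → ZMod 2} :
    semiBent f ↔ ∀ a, walsh f a ^ 2 = 0 ∨ walsh f a ^ 2 = sbLambda n ^ 2 := by
  simp only [semiBent, sq_eq_sq_iff_eq_or_eq_neg, sq_eq_zero_iff]

theorem semiBent_iff_card_ker_polarBilin {f : (Fin n → ZMod 2) → ZMod 2} {c : ZMod 2}
    {Q : QuadraticForm (ZMod 2) (Fin n → ZMod 2)} (hf : ∀ x, f x = c + Q x) :
    semiBent f ↔ Nat.card (LinearMap.ker Q.polarBilin) = if Odd n then 2 else 4 := by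
  have walsh_sq := walsh_sq_of_eq_const_add hf
  rw [semiBent_iff_walsh_sq]
  constructor
  · intro hsb
    obtain ⟨a, ha⟩ := exists_walsh_ne_zero f
    have ha : walsh f a ^ 2 ≠ 0 := pow_ne_zero 2 ha
    have h := ((walsh_sq a).resolve_left ha).symm.trans ((hsb a).resolve_left ha)
    rw [sbLambda_sq] at h
    exact_mod_cast mul_left_cancel₀ (by positivity) h
  · intro hcard a
    have h := walsh_sq a
    rw [hcard] at h
    rw [sbLambda_sq]
    exact_mod_cast h

end Walsh

section AlgebraicNormalForm

variable {n : ℕ}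

theorem prod_one_add_eq_ite {ι : Type*} (s : Finset ι) (y : ι → ZMod 2) :
    ∏ i ∈ s, (1 + y i) = if ∀ i ∈ s, y i = 0 then 1 else 0 := by
  have one_add_eq_ite : ∀ z : ZMod 2, 1 + z = if z = 0 then 1 else 0 := by decide
  simp only [one_add_eq_ite, prod_ite_zero, prod_const_one]

theorem anf_eq_sum_mul_prod (f : (Fin n → ZMod 2) → ZMod 2) (I : Finset (Fin n)) :
    anf f I = ∑ y, f y * ∏ i ∈ Iᶜ, (1 + y i) := by
  have eq_zero_iff : ∀ z : ZMod 2, z = 0 ↔ z ≠ 1 := by decide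
  simp only [anf, sum_filter, prod_one_add_eq_ite, mul_ite, mul_one, mul_zero, mem_compl,
    eq_zero_iff, not_imp_not]

theorem eq_sum_anf_mul_prod (f : (Fin n → ZMod 2) → ZMod 2) (x : Fin n → ZMod 2) :
    f x = ∑ I, anf f I * ∏ i ∈ I, x i := by
  have prod_eq_ite (y : Fin n → ZMod 2) :
      ∏ i, (x i + (1 + y i)) = if x = y then 1 else 0 := by
    have h := prod_one_add_eq_ite univ (x + y)
    simpa [add_left_comm, CharTwo.add_eq_zero, funext_iff] using h
  calc f x = ∑ y, f y * ∏ i, (x i + (1 + y i)) := by simp [prod_eq_ite]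
    _ = ∑ y, ∑ I, f y * (∏ i ∈ Iᶜ, (1 + y i)) * ∏ i ∈ I, x i := by
        simp only [Fintype.prod_add, mul_sum, mul_comm, mul_left_comm]
    _ = ∑ I, anf f I * ∏ i ∈ I, x i := by
        rw [sum_comm]
        simp only [anf_eq_sum_mul_prod, sum_mul]

theorem anf_eq_zero_of_algDegree_lt_card {f : (Fin n → ZMod 2) → ZMod 2} {I : Finset (Fin n)}
    (hI : algDegree f < #I) : anf f I = 0 := by
  by_contra hne
  exact hI.not_ge (le_sup (f := card) (mem_filter_univ I |>.mpr hne))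

theorem exists_quadraticForm_eq_prod {I : Finset (Fin n)} (hI : I.Nonempty) (hI2 : #I ≤ 2) :
    ∃ Q : QuadraticForm (ZMod 2) (Fin n → ZMod 2), ∀ x, Q x = ∏ i ∈ I, x i := by
  have hcard : #I = 1 ∨ #I = 2 := by have := hI.card_pos; omega
  rcases hcard with hcard | hcard
  · obtain ⟨i, rfl⟩ := card_eq_one.mp hcard
    exact ⟨QuadraticMap.proj i i, fun x => by
      rw [QuadraticMap.proj_apply, prod_singleton, ← sq, ZMod.pow_card]⟩
  · obtain ⟨i, j, hij, rfl⟩ := card_eq_two.mp hcard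
    exact ⟨QuadraticMap.proj i j, fun x => (prod_pair hij).symm⟩

theorem exists_quadraticForm_of_algDegree_le_two {f : (Fin n → ZMod 2) → ZMod 2}
    (hf : algDegree f ≤ 2) :
    ∃ (c : ZMod 2) (Q : QuadraticForm (ZMod 2) (Fin n → ZMod 2)), ∀ x, f x = c + Q x := by
  have monomial (I : Finset (Fin n)) : ∃ Q : QuadraticForm (ZMod 2) (Fin n → ZMod 2),
      I ≠ ∅ → ∀ x, Q x = anf f I * ∏ i ∈ I, x i := by
    by_cases hI : I.Nonempty ∧ #I ≤ 2
    · obtain ⟨Q, hQ⟩ := exists_quadraticForm_eq_prod hI.1 hI.2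
      exact ⟨anf f I • Q, fun _ x => by rw [_root_.smul_apply, hQ, smul_eq_mul]⟩
    · refine ⟨0, fun hne x => ?_⟩
      have hlt : algDegree f < #I := by
        have := nonempty_iff_ne_empty.mpr hne
        grind
      rw [anf_eq_zero_of_algDegree_lt_card hlt, zero_mul, _root_.zero_apply]
  choose Q hQ using monomial
  refine ⟨anf f ∅, ∑ I ∈ univ.erase ∅, Q I, fun x => ?_⟩
  rw [eq_sum_anf_mul_prod f x, ← add_sum_erase _ _ (mem_univ ∅), prod_empty, mul_one,
    _root_.sum_apply]
  exact congrArg _ (sum_congr rfl fun I hI => (hQ I (ne_of_mem_erase hI) x).symm)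

end AlgebraicNormalForm

section PolarMatrix

variable {ι R : Type*} [Fintype ι] [DecidableEq ι] [CommRing R]

/-- The Gram matrix of the polar form of `Q` in the standard basis. -/
def polarMatrix (Q : QuadraticForm R (ι → R)) : Matrix ι ι R :=
  of fun s t => polar Q (Pi.single s 1) (Pi.single t 1)

theorem polarMatrix_mulVec (Q : QuadraticForm R (ι → R)) (x : ι → R) (s : ι) :
    (polarMatrix Q *ᵥ x) s = Q.polarBilin x (Pi.single s 1) := by
  conv_rhs => rw [pi_eq_sum_univ' x]
  simp only [map_sum, map_smul, LinearMap.sum_apply, LinearMap.smul_apply, polarBilin_apply_apply,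
    mulVec, dotProduct, polarMatrix, of_apply, smul_eq_mul, mul_comm,
    QuadraticMap.polar_comm Q _ (Pi.single s 1)]

theorem mem_ker_polarBilin_iff {Q : QuadraticForm R (ι → R)} {x : ι → R} :
    x ∈ LinearMap.ker Q.polarBilin ↔ polarMatrix Q *ᵥ x = 0 := by
  simp only [funext_iff, polarMatrix_mulVec, LinearMap.mem_ker]
  exact ⟨fun h s => by rw [h]; rfl, fun h => LinearMap.pi_ext' fun s => LinearMap.ext_ring (h s)⟩

variable [Fintype R] [DecidableEq R]

/-- The number of vectors in the kernel of `M`, computed by enumeration so that it can be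
evaluated by `decide`. -/
def kerCard (M : Matrix ι ι R) : ℕ := #{x | M *ᵥ x = 0}

theorem card_ker_polarBilin (Q : QuadraticForm R (ι → R)) :
    Nat.card (LinearMap.ker Q.polarBilin) = kerCard (polarMatrix Q) :=
  Nat.subtype_card _ fun x => by rw [mem_filter_univ, mem_ker_polarBilin_iff]

end PolarMatrix

section CellularAutomaton

/-- The sum of the copies of `M` placed along the diagonal at the windows of the automaton. -/
def caMatrix {R : Type*} [AddCommMonoid R] {m : ℕ} (n : ℕ) (M : Matrix (Fin m) (Fin m) R) :
    Matrix (Fin n) (Fin n) R :=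
  of fun s t => ∑ i : Fin (n - m + 1),
    if hst : (i.val ≤ s ∧ s < i.val + m) ∧ (i.val ≤ t ∧ t < i.val + m)
    then M ⟨s - i, by omega⟩ ⟨t - i, by omega⟩ else 0

variable {R : Type*} [CommRing R] {m n : ℕ} (h : m ≤ n)

/-- The embedding of the coordinates of the local rule onto the `i`-th window of cells. -/
def caWindow (i : Fin (n - m + 1)) (j : Fin m) : Fin n := ⟨i + j, by omega⟩

/-- The construction `caStar` on quadratic forms. -/
def caStarForm (Q : QuadraticForm R (Fin m → R)) : QuadraticForm R (Fin n → R) :=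
  ∑ i, Q.comp (LinearMap.funLeft R R (caWindow h i))

theorem caStarForm_apply (Q : QuadraticForm R (Fin m → R)) (x : Fin n → R) :
    caStarForm h Q x = ∑ i, Q (x ∘ caWindow h i) :=
  _root_.sum_apply _ _ _

theorem single_comp_caWindow (i : Fin (n - m + 1)) (s : Fin n) :
    (Pi.single s 1 : Fin n → R) ∘ caWindow h i =
      if hs : i.val ≤ s ∧ s < i.val + m then Pi.single ⟨s - i, by omega⟩ 1 else 0 := by
  ext j
  simp only [Function.comp_apply, Pi.single_apply]
  split_ifs <;> simp_all [caWindow, Fin.ext_iff, Pi.single_apply] <;> omega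

theorem polarMatrix_caStarForm (Q : QuadraticForm R (Fin m → R)) :
    polarMatrix (caStarForm h Q) = caMatrix n (polarMatrix Q) := by
  ext s t
  have hpolar (x y : Fin n → R) : polar (caStarForm h Q) x y
      = ∑ i, polar Q (x ∘ caWindow h i) (y ∘ caWindow h i) := by
    simp only [polar, caStarForm_apply, sum_sub_distrib]
    rfl
  simp only [polarMatrix, caMatrix, of_apply, hpolar, single_comp_caWindow]
  refine sum_congr rfl fun i _ => ?_
  split_ifs <;> simp_all

theorem caStar_eq_const_add {f : (Fin m → ZMod 2) → ZMod 2} {c : ZMod 2}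
    {Q : QuadraticForm (ZMod 2) (Fin m → ZMod 2)} (hf : ∀ x, f x = c + Q x) (x : Fin n → ZMod 2) :
    caStar m n h f x = (n - m + 1) • c + caStarForm h Q x := by
  rw [caStarForm_apply, ← Fin.sum_const, ← sum_add_distrib]
  exact sum_congr rfl fun i _ => hf _

theorem semiBent_caStar_iff {f : (Fin m → ZMod 2) → ZMod 2} {c : ZMod 2}
    {Q : QuadraticForm (ZMod 2) (Fin m → ZMod 2)} (hf : ∀ x, f x = c + Q x) :
    semiBent (caStar m n h f) ↔
      kerCard (caMatrix n (polarMatrix Q)) = if Odd n then 2 else 4 := by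
  rw [semiBent_iff_card_ker_polarBilin (caStar_eq_const_add h hf), card_ker_polarBilin,
    polarMatrix_caStarForm]

end CellularAutomaton

section FourVariables

/-- The alternating `4 × 4` matrix over `𝔽₂` with the given entries above the diagonal. -/
def alternatingMatrix (a b c d e k : ZMod 2) : Matrix (Fin 4) (Fin 4) (ZMod 2) :=
  !![0, a, b, c; a, 0, d, e; b, d, 0, k; c, e, k, 0]

theorem exists_eq_alternatingMatrix {M : Matrix (Fin 4) (Fin 4) (ZMod 2)}
    (hdiag : ∀ i, M i i = 0) (hsymm : ∀ i j, M i j = M j i) :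
    ∃ a b c d e k, M = alternatingMatrix a b c d e k := by
  refine ⟨M 0 1, M 0 2, M 0 3, M 1 2, M 1 3, M 2 3, ?_⟩
  ext i j
  fin_cases i <;> fin_cases j <;> first | exact hdiag _ | rfl | exact hsymm _ _

theorem exists_polarMatrix_eq_alternatingMatrix (Q : QuadraticForm (ZMod 2) (Fin 4 → ZMod 2)) :
    ∃ a b c d e k, polarMatrix Q = alternatingMatrix a b c d e k := by
  refine exists_eq_alternatingMatrix (fun i => ?_) fun i j => QuadraticMap.polar_comm Q _ _
  rw [polarMatrix, of_apply, QuadraticMap.polar_self, ZModModule.char_nsmul_eq_zero 2]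

theorem not_forall_kerCard_caMatrix_alternatingMatrix (a b c d e k : ZMod 2) :
    ¬(kerCard (caMatrix 4 (alternatingMatrix a b c d e k)) = 4 ∧
      kerCard (caMatrix 6 (alternatingMatrix a b c d e k)) = 4 ∧
      kerCard (caMatrix 7 (alternatingMatrix a b c d e k)) = 2 ∧
      kerCard (caMatrix 9 (alternatingMatrix a b c d e k)) = 2) := by
  revert a b c d e k
  decide +kernel

theorem exists_not_semiBent_caStar_of_algDegree_le_two {f : (Fin 4 → ZMod 2) → ZMod 2}
    (hf : algDegree f ≤ 2) : ∃ (n : ℕ) (h : 4 ≤ n), n ≤ 9 ∧ ¬semiBent (caStar 4 n h f) := by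
  obtain ⟨c₀, Q, hQ⟩ := exists_quadraticForm_of_algDegree_le_two hf
  obtain ⟨a, b, c, d, e, k, hM⟩ := exists_polarMatrix_eq_alternatingMatrix Q
  by_contra! hsb
  have kerCard_eq (n : ℕ) (h : 4 ≤ n) (hn : n ≤ 9) := (semiBent_caStar_iff h hQ).mp (hsb n h hn)
  rw [hM] at kerCard_eq
  exact not_forall_kerCard_caMatrix_alternatingMatrix a b c d e k
    ⟨kerCard_eq 4 (by decide) (by decide), kerCard_eq 6 (by decide) (by decide),
      kerCard_eq 7 (by decide) (by decide), kerCard_eq 9 (by decide) (by decide)⟩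

/-- The quadratic form `x₀ (x₁ + x₂)`, an optimal local rule. -/
def optimalRule : QuadraticForm (ZMod 2) (Fin 4 → ZMod 2) :=
  QuadraticMap.proj 0 1 + QuadraticMap.proj 0 2

theorem algDegree_optimalRule : algDegree optimalRule = 2 := by
  decide +kernel

theorem polarMatrix_optimalRule : polarMatrix optimalRule = alternatingMatrix 1 1 0 0 0 0 := by
  decide +kernel

theorem semiBent_caStar_optimalRule {n : ℕ} (h : 4 ≤ n) (hn : n ≤ 8) :
    semiBent (caStar 4 n h optimalRule) := by
  rw [semiBent_caStar_iff h fun x => (zero_add (optimalRule x)).symm, polarMatrix_optimalRule]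
  interval_cases n <;> decide +kernel

end FourVariables

/-- over all quadratic functions of 4 variables, the largest `N ∈ {4,…,20}`
such that `f*` is semi-bent for all `4 ≤ n ≤ N` equals `8`; in particular no quadratic
4-variable function yields semi-bent functions for all `4 ≤ n ≤ 20`. -/
theorem quadratic4_max_semibent_range :
    IsGreatest {N : ℕ | 4 ≤ N ∧ N ≤ 20 ∧
      ∃ f : (Fin 4 → ZMod 2) → ZMod 2, algDegree f = 2 ∧
        ∀ n (h : 4 ≤ n), n ≤ N → semiBent (caStar 4 n h f)} 8 ∧
    ¬ ∃ f : (Fin 4 → ZMod 2) → ZMod 2, algDegree f = 2 ∧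
        ∀ n (h : 4 ≤ n), n ≤ 20 → semiBent (caStar 4 n h f) := by
  have range_lt_nine {N : ℕ} {f : (Fin 4 → ZMod 2) → ZMod 2} (hf : algDegree f = 2)
      (hsb : ∀ n (h : 4 ≤ n), n ≤ N → semiBent (caStar 4 n h f)) : N < 9 := by
    obtain ⟨n, h, hn, hnot⟩ := exists_not_semiBent_caStar_of_algDegree_le_two hf.le
    exact lt_of_not_ge fun hN => hnot (hsb n h (hn.trans hN))
  refine ⟨⟨⟨by decide, by decide, optimalRule, algDegree_optimalRule,
    fun n h hn => semiBent_caStar_optimalRule h hn⟩, ?_⟩, ?_⟩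
  · rintro N ⟨-, -, f, hf, hsb⟩
    exact Nat.le_of_lt_succ (range_lt_nine hf hsb)
  · rintro ⟨f, hf, hsb⟩
    exact absurd (range_lt_nine hf hsb) (by decide)
end

section
/- Let f: F_2^3 → F_2 be the elementary CA rule 30, i.e. f(x_1, x_2, x_3) = x_1 ⊕ x_2 ⊕ x_3 ⊕ x_2 x_3. Then for every n with 3 ≤ n ≤ 20, the number of nonzero linear structures of the function f*: F_2^n → F_2 given by the CA-based construction equals 1 if n is odd and 3 if n is even. -/
/-- Elementary CA rule 30: `f(x₁,x₂,x₃) = x₁ ⊕ x₂ ⊕ x₃ ⊕ x₂x₃`. -/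
def rule30 : (Fin 3 → ZMod 2) → ZMod 2 :=
  fun x => x 0 + x 1 + x 2 + x 1 * x 2

/-!
The polar form of `f*` is `x, b ↦ ∑ᵢ (xᵢ₊₁ bᵢ₊₂ + xᵢ₊₂ bᵢ₊₁)`, which is the bilinear form of the
adjacency matrix of the path on the coordinates `1, …, n - 1` and ignores the coordinate `0`.
The linear structures are the vectors of its radical, so there are twice as many of them as vectors
in the kernel of that matrix. A kernel vector, padded by zeros on both sides, satisfies
`d 0 = 0` and `d (k + 2) = -d k`, so it is `χ₄ k • d 1` with `χ₄ = 0, 1, 0, -1, …`; the condition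
at the far end of the path leaves `d 1` free or forces `d 1 = 0`, according to parity.
-/

open Matrix QuadraticMap SimpleGraph ZMod

lemma card_subtype_ne_and {α : Type*} {p : α → Prop} {a : α} (ha : p a) :
    Nat.card {b // b ≠ a ∧ p b} = Nat.card {b // p b} - 1 := by
  have hdiff : {b | b ≠ a ∧ p b} = {b | p b} \ {a} := by
    ext b
    simp [and_comm]
  exact (congrArg Set.ncard hdiff).trans (Set.ncard_sdiff_singleton_of_mem ha)

lemma card_subtype_tail {α : Type*} {n : ℕ} (p : (Fin n → α) → Prop) :
    Nat.card {v : Fin (n + 1) → α // p (Fin.tail v)} = Nat.card α * Nat.card {w // p w} := by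
  rw [← Nat.card_prod]
  exact Nat.card_congr
    { toFun := fun v => (v.1 0, ⟨Fin.tail v.1, v.2⟩)
      invFun := fun w => ⟨Fin.cons w.1 w.2.1, w.2.2⟩
      left_inv := fun v => Subtype.ext (Fin.cons_self_tail v.1)
      right_inv := fun _ => rfl }

lemma χ₄_natCast_add_two (k : ℕ) : χ₄ (k + 2 : ℕ) = -χ₄ k := by
  have h : ∀ a : ZMod 4, χ₄ (a + 2) = -χ₄ a := by decide
  simpa using h k

lemma χ₄_natCast_of_even {k : ℕ} (hk : Even k) : χ₄ k = 0 := by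
  rw [χ₄_nat_eq_if_mod_four, if_pos (Nat.even_iff.mp hk)]

lemma isUnit_χ₄_natCast_of_odd {k : ℕ} (hk : Odd k) : IsUnit (χ₄ k) := by
  rw [χ₄_eq_neg_one_pow (Nat.odd_iff.mp hk)]
  exact isUnit_one.neg.pow _

lemma eq_χ₄_smul_of_add_eq_zero {M : Type*} [AddCommGroup M] {d : ℕ → M} {N : ℕ} (h0 : d 0 = 0)
    (hd : ∀ k < N, d k + d (k + 2) = 0) : ∀ k ≤ N + 1, d k = χ₄ k • d 1
  | 0, _ => by simp [h0]
  | 1, _ => by simp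
  | k + 2, hk => by
    rw [χ₄_natCast_add_two, neg_smul, ← eq_χ₄_smul_of_add_eq_zero h0 hd k (by lia)]
    exact eq_neg_of_add_eq_zero_right (hd k (by lia))

section ZeroPad

variable {M : Type*} [AddCommMonoid M] {N : ℕ}

/-- The sequence `0, c₀, …, c_{N-1}, 0, 0, …` obtained from a vector `c` of length `N`: entry `k` is
`c (k - 1)` where that is defined. It gives the end vertices of a path both of their neighbours. -/
def zeroPad (c : Fin N → M) (k : ℕ) : M :=
  ∑ j : Fin N, if j.val + 1 = k then c j else 0

lemma zeroPad_zero (c : Fin N → M) : zeroPad c 0 = 0 := by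
  simp [zeroPad]

lemma zeroPad_val_add_one (c : Fin N → M) (i : Fin N) : zeroPad c (i + 1) = c i := by
  simp [zeroPad, Fin.val_inj]

lemma zeroPad_length_add_one (c : Fin N → M) : zeroPad c (N + 1) = 0 :=
  Finset.sum_eq_zero fun j _ => if_neg (by lia)

end ZeroPad

section PathGraph

variable {R : Type*} {N : ℕ}

lemma pathGraph_adjMatrix_mulVec_apply [NonAssocSemiring R] [DecidableRel (pathGraph N).Adj]
    (c : Fin N → R) (i : Fin N) :
    ((pathGraph N).adjMatrix R *ᵥ c) i = zeroPad c i + zeroPad c (i + 2) := by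
  simp only [mulVec, dotProduct, adjMatrix_apply, pathGraph_adj, zeroPad,
    ← Finset.sum_add_distrib]
  refine Finset.sum_congr rfl fun j _ => ?_
  split_ifs <;> first | lia | simp

lemma dotProduct_pathGraph_adjMatrix_mulVec [NonAssocSemiring R]
    [DecidableRel (pathGraph (N + 1)).Adj] (y c : Fin (N + 1) → R) :
    y ⬝ᵥ (pathGraph (N + 1)).adjMatrix R *ᵥ c =
      ∑ i : Fin N, (y i.castSucc * c i.succ + y i.succ * c i.castSucc) := by
  have hprev : ∑ i, y i * zeroPad c i = ∑ i : Fin N, y i.succ * c i.castSucc := by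
    simp [Fin.sum_univ_succ, zeroPad_zero, ← zeroPad_val_add_one c]
  have hnext : ∑ i : Fin (N + 1), y i * zeroPad c (i + 2) =
      ∑ i : Fin N, y i.castSucc * c i.succ := by
    simp [Fin.sum_univ_castSucc, zeroPad_length_add_one, ← zeroPad_val_add_one c]
  simp only [dotProduct, pathGraph_adjMatrix_mulVec_apply, mul_add, Finset.sum_add_distrib,
    hprev, hnext, add_comm]

lemma pathGraph_adjMatrix_mulVec_eq_zero_iff [NonAssocRing R]
    [DecidableRel (pathGraph N).Adj] (c : Fin N → R) :
    (pathGraph N).adjMatrix R *ᵥ c = 0 ↔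
      ∃ a : R, χ₄ (N + 1 : ℕ) • a = 0 ∧ (fun i : Fin N => χ₄ (i + 1 : ℕ) • a) = c := by
  simp only [funext_iff, pathGraph_adjMatrix_mulVec_apply, Pi.zero_apply]
  constructor
  · intro hc
    have hpad : ∀ k ≤ N + 1, zeroPad c k = χ₄ k • zeroPad c 1 :=
      eq_χ₄_smul_of_add_eq_zero (zeroPad_zero c) fun k hk => hc ⟨k, hk⟩
    refine ⟨zeroPad c 1, ?_, fun i => ?_⟩
    · rw [← hpad _ le_rfl, zeroPad_length_add_one]
    · rw [← hpad _ (by lia), zeroPad_val_add_one]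
  · rintro ⟨a, ha, hc⟩ i
    have hpad : ∀ k ≤ N + 1, zeroPad c k = χ₄ k • a := by
      rintro (_ | k) hk
      · simp [zeroPad_zero]
      · obtain hlt | rfl : k < N ∨ k = N := by lia
        · rw [hc ⟨k, hlt⟩]
          exact zeroPad_val_add_one c ⟨k, hlt⟩
        · rw [zeroPad_length_add_one, ha]
    rw [hpad _ (by lia), hpad _ (by lia), χ₄_natCast_add_two, neg_smul, add_neg_cancel]

lemma card_ker_pathGraph_adjMatrix_of_even [NonAssocRing R]
    [DecidableRel (pathGraph N).Adj] (hN : Even N) :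
    Nat.card {c : Fin N → R // (pathGraph N).adjMatrix R *ᵥ c = 0} = 1 := by
  have hker (c : Fin N → R) : (pathGraph N).adjMatrix R *ᵥ c = 0 ↔ c = 0 := by
    simp only [pathGraph_adjMatrix_mulVec_eq_zero_iff,
      (isUnit_χ₄_natCast_of_odd hN.add_one).smul_eq_zero, exists_eq_left, smul_zero]
    exact eq_comm
  simp [hker]

lemma card_ker_pathGraph_adjMatrix_of_odd [NonAssocRing R]
    [DecidableRel (pathGraph N).Adj] (hN : Odd N) :
    Nat.card {c : Fin N → R // (pathGraph N).adjMatrix R *ᵥ c = 0} = Nat.card R := by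
  have hinj : Function.Injective fun (a : R) (i : Fin N) => χ₄ (i + 1 : ℕ) • a := fun a b hab => by
    simpa using congrFun hab ⟨0, hN.pos⟩
  have hker (c : Fin N → R) : (pathGraph N).adjMatrix R *ᵥ c = 0 ↔
      c ∈ Set.range fun (a : R) (i : Fin N) => χ₄ (i + 1 : ℕ) • a := by
    simp only [pathGraph_adjMatrix_mulVec_eq_zero_iff, χ₄_natCast_of_even hN.add_one, zero_smul,
      true_and, Set.mem_range]
  simp only [hker]
  exact Nat.card_range_of_injective hinj

end PathGraph

lemma isLinearStructure_zero {n : ℕ} (g : (Fin n → ZMod 2) → ZMod 2) : isLinearStructure g 0 :=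
  Or.inl fun x => by rw [add_zero, CharTwo.add_self_eq_zero]

lemma isLinearStructure_iff_forall_polar_eq {n : ℕ} (g : (Fin n → ZMod 2) → ZMod 2)
    (b : Fin n → ZMod 2) : isLinearStructure g b ↔ ∀ x, polar g x b = g 0 := by
  have hderiv (x) : polar g x b = (g x + g (x + b)) + g b := by
    rw [polar, CharTwo.sub_eq_add, CharTwo.sub_eq_add, add_comm (g (x + b))]
  constructor
  · rintro (hb | hb) x <;>
    · have h0 := hb 0
      rw [zero_add] at h0
      rw [hderiv, hb x, ← h0, CharTwo.add_cancel_right]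
  · intro hb
    have hconst (x) : g x + g (x + b) = g 0 + g b := by
      rw [← hb x, hderiv, CharTwo.add_cancel_right]
    simp only [isLinearStructure, hconst, forall_const]
    generalize g 0 + g b = a
    revert a
    decide

lemma caStar_zero {m n : ℕ} (h : m ≤ n) {f : (Fin m → ZMod 2) → ZMod 2} (hf : f 0 = 0) :
    caStar m n h f 0 = 0 :=
  Finset.sum_eq_zero fun _ _ => hf

lemma polar_caStar {m n : ℕ} (h : m ≤ n) (f : (Fin m → ZMod 2) → ZMod 2) (x b : Fin n → ZMod 2) :
    polar (caStar m n h f) x b = ∑ i : Fin (n - m + 1),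
      polar f (fun j => x ⟨i + j, by lia⟩) (fun j => b ⟨i + j, by lia⟩) := by
  simp only [polar, caStar, ← Finset.sum_sub_distrib]
  rfl

lemma polar_rule30 (x b : Fin 3 → ZMod 2) : polar rule30 x b = x 1 * b 2 + x 2 * b 1 := by
  simp only [polar, rule30, Pi.add_apply]
  ring

lemma polar_caStar_rule30 {N : ℕ} (h : 3 ≤ N + 1) [DecidableRel (pathGraph N).Adj]
    (x b : Fin (N + 1) → ZMod 2) :
    polar (caStar 3 (N + 1) h rule30) x b =
      Fin.tail x ⬝ᵥ (pathGraph N).adjMatrix (ZMod 2) *ᵥ Fin.tail b := by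
  obtain ⟨M, rfl⟩ : ∃ M, N = M + 2 := ⟨N - 2, by lia⟩
  simp only [polar_caStar, polar_rule30]
  exact (dotProduct_pathGraph_adjMatrix_mulVec (Fin.tail x) (Fin.tail b)).symm

lemma isLinearStructure_caStar_rule30_iff {N : ℕ} (h : 3 ≤ N + 1) [DecidableRel (pathGraph N).Adj]
    (b : Fin (N + 1) → ZMod 2) :
    isLinearStructure (caStar 3 (N + 1) h rule30) b ↔
      (pathGraph N).adjMatrix (ZMod 2) *ᵥ Fin.tail b = 0 := by
  simp only [isLinearStructure_iff_forall_polar_eq, polar_caStar_rule30,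
    caStar_zero h (show rule30 0 = 0 by simp [rule30])]
  rw [← dotProduct_eq_zero_iff]
  constructor
  · intro hb y
    simpa [dotProduct_comm] using hb (Fin.cons 0 y)
  · intro hb x
    rw [dotProduct_comm, hb]

theorem rule30_linear_structures_general (n : ℕ) (h : 3 ≤ n) :
    Nat.card {b : Fin n → ZMod 2 // b ≠ 0 ∧ isLinearStructure (caStar 3 n h rule30) b} =
      if Odd n then 1 else 3 := by
  classical
  obtain ⟨N, rfl⟩ : ∃ N, n = N + 1 := ⟨n - 1, by lia⟩
  rw [card_subtype_ne_and (isLinearStructure_zero _)]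
  simp only [isLinearStructure_caStar_rule30_iff]
  rw [card_subtype_tail fun c => (pathGraph N).adjMatrix (ZMod 2) *ᵥ c = 0, Nat.card_zmod]
  rcases Nat.even_or_odd N with hN | hN
  · rw [card_ker_pathGraph_adjMatrix_of_even hN, if_pos hN.add_one]
  · rw [card_ker_pathGraph_adjMatrix_of_odd hN, Nat.card_zmod,
      if_neg (Nat.not_odd_iff_even.mpr hN.add_one)]

/-- for all `3 ≤ n ≤ 20`, the number of nonzero linear structures of the
function obtained from rule 30 by the CA-based construction is 1 if `n` is odd and
3 if `n` is even. -/
theorem rule30_linear_structures :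
    ∀ n (h : 3 ≤ n), n ≤ 20 →
      Nat.card {b : Fin n → ZMod 2 //
        b ≠ 0 ∧ isLinearStructure (caStar 3 n h rule30) b} =
      if Odd n then 1 else 3 :=
  fun n h _ => rule30_linear_structures_general n h
end
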